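/- arXiv:2402.18058 — 4 statements merged into one kernel-verified Lean document; each statement's English description precedes it below -/
import Mathlib

section
/- Let k ≥ 0. Every finitely supported permutation s of {1, 2, ...} admits exactly one permutation t of the form t = (p_1 r_1)(p_2 r_2)···(p_q r_q), a product of q ≥ 0 pairwise disjoint transpositions with p_1 < p_2 < ... < p_q ≤ k < r_1 < r_2 < ... < r_q, such that t⁻¹·s maps the set {1, ..., k} onto itself. Equivalently, every left coset of the setwise stabilizer of {1, ..., k} in the finitary symmetric group contains a unique involution of this form. -/
theorem swapProd_apply : ∀ (q : ℕ) (p r : Fin q → ℕ), Function.Injective p →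
    Function.Injective r → (∀ i j, p i ≠ r j) →
    (∀ i, (List.ofFn fun i => Equiv.swap (p i) (r i)).prod (p i) = r i) ∧
    (∀ i, (List.ofFn fun i => Equiv.swap (p i) (r i)).prod (r i) = p i) ∧
    (∀ x, (∀ i, p i ≠ x) → (∀ i, r i ≠ x) →
      (List.ofFn fun i => Equiv.swap (p i) (r i)).prod x = x) := by
  intro q
  induction q with
  | zero => intro p r _ _ _; simp
  | succ n ih =>
    intro p r hp hr hpr
    obtain ⟨h1, h2, h3⟩ := ih (fun i => p i.succ) (fun i => r i.succ)
      (fun a b h => Fin.succ_injective _ (hp h)) (fun a b h => Fin.succ_injective _ (hr h))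
      (fun i j => hpr _ _)
    have e : (List.ofFn fun i => Equiv.swap (p i) (r i)).prod =
        Equiv.swap (p 0) (r 0) * (List.ofFn fun i : Fin n =>
          Equiv.swap (p i.succ) (r i.succ)).prod := by
      rw [List.ofFn_succ, List.prod_cons]
    rw [e]
    refine ⟨fun i => ?_, fun i => ?_, fun x hx hx' => ?_⟩
    · rw [Equiv.Perm.mul_apply]
      refine Fin.cases ?_ (fun j => ?_) i
      · rw [h3 _ (fun i h => Fin.succ_ne_zero i (hp h)) (fun i h => hpr _ _ h.symm),
          Equiv.swap_apply_left]
      · rw [h1 j, Equiv.swap_apply_of_ne_of_ne (fun h => hpr _ _ h.symm)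
          (fun h => Fin.succ_ne_zero j (hr h))]
    · rw [Equiv.Perm.mul_apply]
      refine Fin.cases ?_ (fun j => ?_) i
      · rw [h3 _ (fun i h => hpr _ _ h) (fun i h => Fin.succ_ne_zero i (hr h)),
          Equiv.swap_apply_right]
      · rw [h2 j, Equiv.swap_apply_of_ne_of_ne (fun h => Fin.succ_ne_zero j (hp h))
          (fun h => hpr _ _ h)]
    · rw [Equiv.Perm.mul_apply, h3 x (fun i => hx _) (fun i => hx' _),
        Equiv.swap_apply_of_ne_of_ne (hx 0).symm (hx' 0).symm]

theorem swapProd_image (k q : ℕ) (p r : Fin q → ℕ) (hp : StrictMono p) (hr : StrictMono r)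
    (hpk : ∀ i, p i < k) (hrk : ∀ i, k ≤ r i) :
    ⇑(List.ofFn fun i => Equiv.swap (p i) (r i)).prod '' {i | i < k} =
      ({i | i < k} \ Set.range p) ∪ Set.range r := by
  obtain ⟨h1, h2, h3⟩ := swapProd_apply q p r hp.injective hr.injective
    (fun i j h => by have := hpk i; have := hrk j; omega)
  generalize (List.ofFn fun i => Equiv.swap (p i) (r i)).prod = t at *
  ext y
  constructor
  · rintro ⟨x, hx, rfl⟩
    have hx : x < k := hx
    by_cases hxp : ∃ i, p i = x
    · obtain ⟨i, rfl⟩ := hxp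
      exact Or.inr ⟨i, (h1 i).symm⟩
    · push Not at hxp
      rw [h3 x hxp (fun i h => by have := hrk i; omega)]
      exact Or.inl ⟨hx, fun ⟨i, hi⟩ => hxp i hi⟩
  · rintro (⟨hy, hyp⟩ | ⟨i, rfl⟩)
    · have hy : y < k := hy
      exact ⟨y, hy, h3 y (fun i h => hyp ⟨i, h⟩) (fun i h => by have := hrk i; omega)⟩
    · exact ⟨p i, hpk i, h1 i⟩

theorem image_cond (s t : Equiv.Perm ℕ) (A : Set ℕ) :
    ⇑(t⁻¹ * s) '' A = A ↔ s '' A = t '' A := by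
  rw [Equiv.Perm.coe_mul, Set.image_comp]
  constructor
  · intro h
    conv_rhs => rw [← h]
    rw [← Set.image_comp, ← Equiv.Perm.coe_mul]
    simp
  · intro h
    rw [h, ← Set.image_comp, ← Equiv.Perm.coe_mul]
    simp

theorem ranges_eq (k q : ℕ) (p r : Fin q → ℕ) (S : Set ℕ)
    (hpk : ∀ i, p i < k) (hrk : ∀ i, k ≤ r i)
    (h : S = ({i | i < k} \ Set.range p) ∪ Set.range r) :
    Set.range p = {i | i < k} \ S ∧ Set.range r = S \ {i | i < k} := by
  subst h
  constructor
  · ext y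
    constructor
    · rintro ⟨i, rfl⟩
      refine ⟨hpk i, ?_⟩
      rintro (⟨_, h⟩ | ⟨j, hj⟩)
      · exact h ⟨i, rfl⟩
      · have := hpk i; have := hrk j; omega
    · rintro ⟨hy, h⟩
      by_contra hc
      exact h (Or.inl ⟨hy, hc⟩)
  · ext y
    constructor
    · rintro ⟨i, rfl⟩
      exact ⟨Or.inr ⟨i, rfl⟩, fun h => absurd (hrk i) (not_le.2 h)⟩
    · rintro ⟨h | h, hy⟩
      · exact absurd h.1 hy
      · exact h

theorem stmt0 (k : ℕ) (s : Equiv.Perm ℕ) (hs : {i | s i ≠ i}.Finite) :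
    ∃! t : Equiv.Perm ℕ,
      (∃ (q : ℕ) (p r : Fin q → ℕ),
        StrictMono p ∧ StrictMono r ∧ (∀ i, p i < k) ∧ (∀ i, k ≤ r i) ∧
        t = (List.ofFn fun i => Equiv.swap (p i) (r i)).prod) ∧
      ⇑(t⁻¹ * s) '' {i | i < k} = {i | i < k} := by
  apply existsUnique_of_exists_of_unique
  · let A := Finset.range k
    let B := A.image s
    have hc : (B \ A).card = (A \ B).card :=
      Finset.card_sdiff_comm (Finset.card_image_of_injective _ s.injective)
    let p := (A \ B).orderEmbOfFin rfl
    let r := (B \ A).orderEmbOfFin hc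
    have hpm : ∀ i, p i ∈ A \ B := fun i => Finset.orderEmbOfFin_mem _ _ i
    have hrm : ∀ i, r i ∈ B \ A := fun i => Finset.orderEmbOfFin_mem _ _ i
    have hpk : ∀ i, p i < k := fun i => Finset.mem_range.1 (Finset.mem_sdiff.1 (hpm i)).1
    have hrk : ∀ i, k ≤ r i := fun i => by
      have := (Finset.mem_sdiff.1 (hrm i)).2
      simpa [A] using this
    refine ⟨_, ⟨_, p, r, p.strictMono, r.strictMono, hpk, hrk, rfl⟩, ?_⟩
    rw [image_cond, swapProd_image k _ p r p.strictMono r.strictMono hpk hrk]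
    have e1 : Set.range p = ((A \ B : Finset ℕ) : Set ℕ) := Finset.range_orderEmbOfFin _ _
    have e2 : Set.range r = ((B \ A : Finset ℕ) : Set ℕ) := Finset.range_orderEmbOfFin _ _
    have eA : {i | i < k} = (A : Set ℕ) := by ext; simp [A]
    have eB : s '' {i | i < k} = (B : Set ℕ) := by rw [eA]; simp [B]
    rw [e1, e2, eB, eA]
    ext y
    simp only [Finset.coe_sdiff, Set.mem_union, Set.mem_diff, Finset.mem_coe]
    tauto
  · rintro t₁ t₂ ⟨⟨q, p, r, hp, hr, hpk, hrk, rfl⟩, h⟩ ⟨⟨q', p', r', hp', hr', hpk', hrk', rfl⟩, h'⟩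
    rw [image_cond, swapProd_image k _ _ _ hp hr hpk hrk] at h
    rw [image_cond, swapProd_image k _ _ _ hp' hr' hpk' hrk'] at h'
    obtain ⟨a, b⟩ := ranges_eq k q p r _ hpk hrk h
    obtain ⟨a', b'⟩ := ranges_eq k q' p' r' _ hpk' hrk' h'
    have hpp : Set.range p = Set.range p' := a.trans a'.symm
    have hrr : Set.range r = Set.range r' := b.trans b'.symm
    have hq : q = q' := by
      have := congrArg Nat.card (congrArg Set.Elem hpp)
      rw [Nat.card_range_of_injective hp.injective,
        Nat.card_range_of_injective hp'.injective] at this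
      simpa using this
    subst hq
    rw [(StrictMono.range_inj hp hp').1 hpp, (StrictMono.range_inj hr hr').1 hrr]
end

section
/- Let k ≥ 0 and let c be a cycle in S∞ (a finitely supported permutation with exactly one orbit of size greater than 1) which does not map {1, ..., k} onto itself. Then there exists a permutation ĉ that is a product of pairwise disjoint transpositions, each of which exchanges a point of supp(c) ∩ {k+1, k+2, ...} with a point of supp(c) ∩ {1, ..., k}, such that ĉ·c maps {1, ..., k} onto itself (i.e., ĉ·c lies in the Young subgroup S_k·S_{k∞}). -/
theorem aux_swaps (q : ℕ) : ∀ (A B : Finset ℕ), (A \ B).card = q → (B \ A).card = q →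
    ∃ (p r : Fin q → ℕ), Function.Injective p ∧ Function.Injective r ∧
      (∀ i, p i ∈ A \ B) ∧ (∀ i, r i ∈ B \ A) ∧
      ⇑((List.ofFn fun i => Equiv.swap (p i) (r i)).prod) '' (B : Set ℕ) = (A : Set ℕ) := by
  induction q with
  | zero =>
    intro A B h1 h2
    refine ⟨Fin.elim0, Fin.elim0, fun i => i.elim0, fun i => i.elim0, fun i => i.elim0,
      fun i => i.elim0, ?_⟩
    rw [Finset.card_eq_zero, Finset.sdiff_eq_empty_iff_subset] at h1 h2
    simp [Finset.Subset.antisymm h2 h1]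
  | succ q ih =>
    intro A B h1 h2
    obtain ⟨x, hx⟩ : (A \ B).Nonempty := by rw [← Finset.card_pos]; omega
    obtain ⟨y, hy⟩ : (B \ A).Nonempty := by rw [← Finset.card_pos]; omega
    have hx' := Finset.mem_sdiff.1 hx
    have hy' := Finset.mem_sdiff.1 hy
    have e1 : (insert y (A.erase x)) \ B = (A \ B).erase x := by
      ext z; simp only [Finset.mem_sdiff, Finset.mem_insert, Finset.mem_erase]; grind
    have e2 : B \ (insert y (A.erase x)) = (B \ A).erase y := by
      ext z; simp only [Finset.mem_sdiff, Finset.mem_insert, Finset.mem_erase]; grind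
    obtain ⟨p, r, hp, hr, hpA, hrB, him⟩ := ih (insert y (A.erase x)) B
      (by rw [e1, Finset.card_erase_of_mem hx]; omega)
      (by rw [e2, Finset.card_erase_of_mem hy]; omega)
    rw [e1] at hpA
    rw [e2] at hrB
    refine ⟨Fin.cons x p, Fin.cons y r, ?_, ?_, ?_, ?_, ?_⟩
    · rw [Fin.cons_injective_iff]
      refine ⟨?_, hp⟩
      rintro ⟨i, hi⟩
      exact (Finset.mem_erase.1 (hpA i)).1 hi
    · rw [Fin.cons_injective_iff]
      refine ⟨?_, hr⟩
      rintro ⟨i, hi⟩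
      exact (Finset.mem_erase.1 (hrB i)).1 hi
    · intro i
      refine Fin.cases ?_ (fun j => ?_) i
      · simpa using hx
      · simpa only [Fin.cons_succ] using (Finset.mem_erase.1 (hpA j)).2
    · intro i
      refine Fin.cases ?_ (fun j => ?_) i
      · simpa using hy
      · simpa only [Fin.cons_succ] using (Finset.mem_erase.1 (hrB j)).2
    · rw [List.ofFn_succ, List.prod_cons, Equiv.Perm.coe_mul, Set.image_comp]
      simp only [Fin.cons_succ, Fin.cons_zero]
      rw [him]
      rw [Equiv.image_eq_preimage_symm]
      ext z
      have hxy : x ≠ y := fun h => hy'.2 (h ▸ hx'.1)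
      rw [Set.mem_preimage, Equiv.symm_swap, Finset.mem_coe, Finset.mem_coe, Finset.mem_insert,
        Finset.mem_erase]
      by_cases h1 : z = x
      · subst h1
        simp [hx'.1]
      · by_cases h2 : z = y
        · subst h2
          simp [hxy, hy'.2]
        · rw [Equiv.swap_apply_of_ne_of_ne h1 h2]
          simp [h1, h2]

/-!
STATEMENT 1.
`S∞` is modeled as the finitely supported permutations of `ℕ` (0-based, so the set
`{1, ..., k}` of the paper becomes `{i | i < k}` and `{k+1, k+2, ...}` becomes `{i | k ≤ i}`).
For a finitely supported cycle `c` not mapping `{i | i < k}` onto itself there is a product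
`ĉ` of pairwise disjoint transpositions, each exchanging a point of `supp c ∩ {i | k ≤ i}`
with a point of `supp c ∩ {i | i < k}`, such that `ĉ * c` maps `{i | i < k}` onto itself.
-/
theorem stmt1 (k : ℕ) (c : Equiv.Perm ℕ) (hfin : {i | c i ≠ i}.Finite)
    (hcyc : c.IsCycle) (hk : ⇑c '' {i | i < k} ≠ {i | i < k}) :
    ∃ (q : ℕ) (p r : Fin q → ℕ),
      Function.Injective p ∧ Function.Injective r ∧
      (∀ i, p i < k ∧ c (p i) ≠ p i) ∧
      (∀ i, k ≤ r i ∧ c (r i) ≠ r i) ∧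
      ⇑((List.ofFn fun i => Equiv.swap (p i) (r i)).prod * c) '' {i | i < k}
        = {i | i < k} := by
  have hcard : ((Finset.range k).map c.toEmbedding).card = (Finset.range k).card :=
    Finset.card_map _
  obtain ⟨p, r, hp, hr, hpA, hrB, him⟩ := aux_swaps _ (Finset.range k)
    ((Finset.range k).map c.toEmbedding) rfl (Finset.card_sdiff_comm hcard)
  refine ⟨_, p, r, hp, hr, ?_, ?_, ?_⟩
  · intro i
    have h := hpA i
    simp only [Finset.mem_sdiff, Finset.mem_range, Finset.mem_map] at h
    exact ⟨h.1, fun e => h.2 ⟨p i, h.1, e⟩⟩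
  · intro i
    have h := hrB i
    simp only [Finset.mem_sdiff, Finset.mem_range, Finset.mem_map] at h
    obtain ⟨⟨a, ha, hca⟩, hk'⟩ := h
    refine ⟨not_lt.1 hk', fun e => hk' ?_⟩
    have : c a = r i := hca
    have : a = r i := c.injective (by rw [this, e])
    omega
  · rw [Equiv.Perm.coe_mul, Set.image_comp]
    have hA : ((Finset.range k : Finset ℕ) : Set ℕ) = {i | i < k} := by ext; simp
    rw [Finset.coe_map, hA] at him
    exact him
end

section
/- Let k ≥ 0 and let ŝ = (p_1 r_1)···(p_q r_q) and ŝ' = (p'_1 r'_1)···(p'_{q'} r'_{q'}) be products of pairwise disjoint transpositions in S∞, where p_1 < p_2 < ... < p_q ≤ k, p'_1 < ... < p'_{q'} ≤ k, and all r_i and all r'_i lie in {k+1, k+2, ...}. If ŝ and ŝ' lie in the same left coset of the setwise stabilizer of {1, ..., k} (i.e., ŝ⁻¹·ŝ' maps {1, ..., k} onto itself), then q = q', {p_1, ..., p_q} = {p'_1, ..., p'_{q'}}, and {r_1, ..., r_q} = {r'_1, ..., r'_{q'}}. -/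
theorem aux_mem (k : ℕ) : ∀ (q : ℕ) (p r : Fin q → ℕ), Function.Injective p →
    Function.Injective r → (∀ i, p i < k) → (∀ i, k ≤ r i) → ∀ x : ℕ,
    (((List.ofFn fun i => Equiv.swap (p i) (r i)).prod)⁻¹ x < k ↔
      ((x < k ∧ ∀ i, p i ≠ x) ∨ ∃ i, r i = x)) := by
  intro q
  induction q with
  | zero => intro p r _ _ _ _ x; simp
  | succ n ih =>
    intro p r hp hr hpk hrk x
    have ih' := ih (fun i => p i.succ) (fun i => r i.succ)
      (fun a b h => Fin.succ_injective _ (hp h)) (fun a b h => Fin.succ_injective _ (hr h))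
      (fun i => hpk _) (fun i => hrk _) (Equiv.swap (p 0) (r 0) x)
    rw [List.ofFn_succ, List.prod_cons, mul_inv_rev, Equiv.swap_inv, Equiv.Perm.mul_apply, ih',
      Fin.forall_fin_succ, Fin.exists_fin_succ]
    have h0 := hpk 0
    have h1 := hrk 0
    have h2 : ∀ i : Fin n, p i.succ ≠ p 0 := fun i h => Fin.succ_ne_zero i (hp h)
    have h3 : ∀ i : Fin n, r i.succ ≠ r 0 := fun i h => Fin.succ_ne_zero i (hr h)
    have h4 : ∀ i : Fin n, r i.succ ≠ p 0 := fun i h => by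
      have := hrk i.succ
      omega
    by_cases ha : x = p 0
    · subst ha
      rw [Equiv.swap_apply_left]
      have h5 : ¬ r 0 < k := by omega
      have h6 : r 0 ≠ p 0 := by omega
      simp [h3, h4, h5, h6]
    · by_cases hb : x = r 0
      · subst hb
        rw [Equiv.swap_apply_right]
        simp [h0, h2]
      · rw [Equiv.swap_apply_of_ne_of_ne ha hb]
        simp [Ne.symm ha, Ne.symm hb]

theorem stmt3 (k q q' : ℕ) (p r : Fin q → ℕ) (p' r' : Fin q' → ℕ)
    (hp : StrictMono p) (hp' : StrictMono p')
    (hr : Function.Injective r) (hr' : Function.Injective r')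
    (hpk : ∀ i, p i < k) (hp'k : ∀ i, p' i < k)
    (hrk : ∀ i, k ≤ r i) (hr'k : ∀ i, k ≤ r' i)
    (hcoset :
      ⇑(((List.ofFn fun i => Equiv.swap (p i) (r i)).prod)⁻¹
          * (List.ofFn fun i => Equiv.swap (p' i) (r' i)).prod) '' {i | i < k}
        = {i | i < k}) :
    q = q' ∧ Set.range p = Set.range p' ∧ Set.range r = Set.range r' := by
  have key : ∀ x : ℕ, ((x < k ∧ ∀ i, p i ≠ x) ∨ ∃ i, r i = x) ↔
      ((x < k ∧ ∀ i, p' i ≠ x) ∨ ∃ i, r' i = x) := by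
    intro x
    rw [← aux_mem k q p r hp.injective hr hpk hrk x,
      ← aux_mem k q' p' r' hp'.injective hr' hp'k hr'k x]
    generalize (List.ofFn fun i => Equiv.swap (p i) (r i)).prod = s at hcoset
    generalize (List.ofFn fun i => Equiv.swap (p' i) (r' i)).prod = t at hcoset
    have h := Set.ext_iff.1 hcoset (s⁻¹ x)
    have e : s⁻¹ x = (s⁻¹ * t) (t⁻¹ x) := by simp
    rw [e, (s⁻¹ * t).injective.mem_set_image, ← e] at h
    exact h.symm
  have hP : Set.range p = Set.range p' := by
    ext x
    have := key x
    constructor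
    · rintro ⟨i, rfl⟩
      have := hpk i
      by_contra hc
      have h2 := (key (p i)).2 (Or.inl ⟨this, fun j hj => hc ⟨j, hj⟩⟩)
      rcases h2 with h2 | ⟨j, hj⟩
      · exact h2.2 i rfl
      · have := hrk j
        omega
    · rintro ⟨i, rfl⟩
      have := hp'k i
      by_contra hc
      have h2 := (key (p' i)).1 (Or.inl ⟨this, fun j hj => hc ⟨j, hj⟩⟩)
      rcases h2 with h2 | ⟨j, hj⟩
      · exact h2.2 i rfl
      · have := hr'k j
        omega
  have hR : Set.range r = Set.range r' := by
    ext x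
    constructor
    · rintro ⟨i, rfl⟩
      have := hrk i
      rcases (key (r i)).1 (Or.inr ⟨i, rfl⟩) with h | h
      · have := h.1
        omega
      · exact h
    · rintro ⟨i, rfl⟩
      have := hr'k i
      rcases (key (r' i)).2 (Or.inr ⟨i, rfl⟩) with h | h
      · have := h.1
        omega
      · exact h
  refine ⟨?_, hP, hR⟩
  have h := congrArg Set.ncard hP
  rw [Set.ncard_range_of_injective hp.injective, Set.ncard_range_of_injective hp'.injective] at h
  simpa using h
end

section
/- Let p, q be nonnegative real numbers with p + q = 1, let ν be the probability measure on {0, 1} with ν({0}) = p and ν({1}) = q, and let μ be the infinite product measure of countably many copies of ν on X = {0, 1}^ℕ. Then for every n, ∫_X (−1)^{x_n}·(−1)^{x_{n+1}} dμ(x) − ∫_X 1 dμ(x) = (p − q)² − 1. (This is the matrix-coefficient identity (Π(1^(n)) Π((n n+1)) Π(1^(n)) 𝟙, 𝟙) − (Π((n n+1)) 𝟙, 𝟙) = (p − q)² − 1 of Example 3 of the paper, where Π is the natural representation of Z_2 wr S∞ on L²(X, μ) and 𝟙 is the constant function 1; it shows Π is not stable.) -/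
open MeasureTheory

/-!
STATEMENT 6.
The two-point space `{0, 1}` is modeled by `Bool` (`false ↔ 0`, `true ↔ 1`), so
`(-1)^{x_n}` becomes `if x n then -1 else 1`, and `ν({0}) = p`, `ν({1}) = q`.
The infinite product measure `μ = ν^ℕ` on `X = Bool^ℕ` is characterized by its values on
cylinder sets: `μ {x | ∀ i ∈ F, x i = v i} = ∏ i ∈ F, ν({v i})` for every finite `F ⊆ ℕ`.
The claim is the matrix-coefficient identity
`∫ (-1)^{x_n} (-1)^{x_{n+1}} dμ − ∫ 1 dμ = (p − q)² − 1` of Example 3.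
-/
theorem stmt6 (p q : ℝ) (hp : 0 ≤ p) (hq : 0 ≤ q) (hpq : p + q = 1)
    (μ : Measure (ℕ → Bool))
    (hμ : ∀ (F : Finset ℕ) (v : ℕ → Bool),
      μ {x | ∀ i ∈ F, x i = v i} = ∏ i ∈ F, ENNReal.ofReal (if v i then q else p))
    (n : ℕ) :
    (∫ x, (if x n then (-1 : ℝ) else 1) * (if x (n + 1) then (-1 : ℝ) else 1) ∂μ)
      - (∫ _x, (1 : ℝ) ∂μ) = (p - q) ^ 2 - 1 := by
  have huniv : μ Set.univ = 1 := by simpa using hμ ∅ (fun _ => false)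
  have hprob : IsProbabilityMeasure μ := ⟨huniv⟩
  let g : (ℕ → Bool) → Bool × Bool := fun x => (x n, x (n + 1))
  have hg : Measurable g := by fun_prop
  have hprobg : IsProbabilityMeasure (μ.map g) := Measure.isProbabilityMeasure_map hg.aemeasurable
  have key : ∀ a b : Bool,
      (μ.map g).real {(a, b)} = (if a then q else p) * (if b then q else p) := by
    intro a b
    have h := hμ {n, n + 1} (fun i => if i = n then a else b)
    have hset : {x : ℕ → Bool | ∀ i ∈ ({n, n + 1} : Finset ℕ), x i = if i = n then a else b}
        = g ⁻¹' {(a, b)} := by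
      ext x
      simp [g]
    rw [hset, Finset.prod_pair (by simp)] at h
    have ha : 0 ≤ (if a then q else p) := by split_ifs <;> assumption
    have hb : 0 ≤ (if b then q else p) := by split_ifs <;> assumption
    rw [Measure.real, Measure.map_apply hg (measurableSet_singleton _), h]
    simp [ENNReal.toReal_mul, ENNReal.toReal_ofReal ha, ENNReal.toReal_ofReal hb]
  have hint : ∫ x, (if x n then (-1 : ℝ) else 1) * (if x (n + 1) then (-1 : ℝ) else 1) ∂μ
      = ∫ y, (if y.1 then (-1 : ℝ) else 1) * (if y.2 then (-1 : ℝ) else 1) ∂(μ.map g) := by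
    rw [integral_map hg.aemeasurable (Measurable.of_discrete.aestronglyMeasurable)]
  rw [hint, integral_fintype (Integrable.of_finite), Fintype.sum_prod_type]
  simp only [key, Fintype.sum_bool]
  simp
  ring
end
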